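/- Suppose the pair (𝒫,𝒟) satisfies conditions (T1)–(T3), and let (n_k)_{k≥1} be a strictly increasing sequence with Φ(n_k+1) = 3 (so 𝒟_{n_k+1} = {0, a_{n_k+1}, b_{n_k+1}}) and limsup_{k→∞} b_{n_k+1}/p_{n_k+1} < 2/3. Then there exist ε > 0 and N ∈ ℕ such that for every k > N, every ξ with |ξ| < 1, every σ ∈ {−1,1}^ℕ, every admissible α, and every λ ∈ Λ_{n_k}^{σ,α}, one has |m_{𝒟_{n_k+1}}((ξ + λ)/P_{n_k+1})| ≥ ε. -/

import Mathlib

open MeasureTheory Filter Finset Real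
open scoped ENNReal NNReal

noncomputable section

/-- `P n = p 1 * p 2 * ⋯ * p n`. -/
def Pprod (p : ℕ → ℕ) (n : ℕ) : ℕ := ∏ i ∈ Finset.Icc 1 n, p i

/-- The uniform probability measure on the finite set `s • E ⊆ ℝ`. -/
def unifD (E : Finset ℕ) (s : ℝ) : Measure ℝ :=
  (E.card : ℝ≥0∞)⁻¹ • ∑ d ∈ E, Measure.dirac (s * (d : ℝ))

/-- The finite convolutions `μ_n = δ_{P₁⁻¹D₁} ∗ ⋯ ∗ δ_{Pₙ⁻¹Dₙ}`. -/
def muN (p : ℕ → ℕ) (D : ℕ → Finset ℕ) : ℕ → Measure ℝ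
  | 0 => Measure.dirac 0
  | n + 1 => Measure.conv (muN p D n) (unifD (D (n + 1)) ((Pprod p (n + 1) : ℝ)⁻¹))

/-- `μ` is the weak limit of the sequence of measures `ν n`. -/
def IsWeakLimit (ν : ℕ → Measure ℝ) (μ : Measure ℝ) : Prop :=
  ∀ f : BoundedContinuousFunction ℝ ℝ,
    Tendsto (fun n => ∫ x, f x ∂ν n) atTop (nhds (∫ x, f x ∂μ))

/-- `μ` is the Moran measure attached to `(p, D)`: the infinite convolution
`δ_{P₁⁻¹D₁} ∗ δ_{P₂⁻¹D₂} ∗ ⋯`, in the sense of weak convergence. -/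
def IsMoran (p : ℕ → ℕ) (D : ℕ → Finset ℕ) (μ : Measure ℝ) : Prop :=
  IsProbabilityMeasure μ ∧ IsWeakLimit (muN p D) μ

/-- The exponentials `e_λ, λ ∈ Λ` are pairwise orthogonal in `L²(μ)`. -/
def IsOrthSet (μ : Measure ℝ) (Λ : Set ℝ) : Prop :=
  ∀ l ∈ Λ, ∀ l' ∈ Λ, l ≠ l' →
    ∫ x : ℝ, Complex.exp (2 * Real.pi * Complex.I * (l - l') * x) ∂μ = 0

/-- `Λ` is a spectrum of `μ`: the exponentials `e_λ, λ ∈ Λ` form an orthonormal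
basis of `L²(μ)` (orthonormal + maximal, i.e. complete). -/
def IsSpectrum (μ : Measure ℝ) (Λ : Set ℝ) : Prop :=
  IsOrthSet μ Λ ∧
  ∀ f : ℝ → ℂ, MemLp f 2 μ →
    (∀ l ∈ Λ, ∫ x : ℝ, f x * Complex.exp (-(2 * Real.pi * Complex.I * l * x)) ∂μ = 0) →
    f =ᵐ[μ] 0

def IsSpectralMeasure (μ : Measure ℝ) : Prop := ∃ Λ : Set ℝ, Λ.Countable ∧ IsSpectrum μ Λ

/-- Condition (T1): `D n = {0,1,…,N-1}` with `3 < N`, `N ∣ p n`, `N < p n`. -/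
def T1cond (p : ℕ → ℕ) (D : ℕ → Finset ℕ) (n : ℕ) : Prop :=
  ∃ N : ℕ, 3 < N ∧ N ∣ p n ∧ N < p n ∧ D n = Finset.range N

/-- Condition (T2) (except for the global sup condition): `D n = {0,a,b}`,
`0 < a < b`, `gcd(a,b) = 1`, `{a,b} ≡ {1,2} (mod 3)`, `3 ∣ p n`. -/
def T2cond (p : ℕ → ℕ) (D : ℕ → Finset ℕ) (n : ℕ) : Prop :=
  ∃ a b : ℕ, 0 < a ∧ a < b ∧ Nat.gcd a b = 1 ∧
    (a % 3 = 1 ∧ b % 3 = 2 ∨ a % 3 = 2 ∧ b % 3 = 1) ∧ 3 ∣ p n ∧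
    D n = ({0, a, b} : Finset ℕ)

/-- Condition (T3): `D n = {0,d}` with `0 < d < p n` and `p n / gcd (d, p n)` even.
(The decomposition `d = 2^l d'` with `d'` odd always exists, with `l` the 2-adic
valuation of `d`.) -/
def T3cond (p : ℕ → ℕ) (D : ℕ → Finset ℕ) (n : ℕ) : Prop :=
  ∃ d : ℕ, 0 < d ∧ d < p n ∧ 2 ∣ p n / Nat.gcd d (p n) ∧ D n = ({0, d} : Finset ℕ)

/-- The pair `(p, D)` satisfies conditions (T1)–(T3), including the requirement
`sup {b n / p n : n of type (T2)} < 2/3`. -/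
def SatisfiesT (p : ℕ → ℕ) (D : ℕ → Finset ℕ) : Prop :=
  (∀ n, 1 ≤ n → T1cond p D n ∨ T2cond p D n ∨ T3cond p D n) ∧
  ∃ c : ℝ, c < 2 / 3 ∧ ∀ n, 1 ≤ n → T2cond p D n → (((D n).sup id : ℕ) : ℝ) / (p n : ℝ) ≤ c

/-- `σ ∈ {-1,1}^ℕ`. -/
def IsSigma (σ : ℕ → ℤ) : Prop := ∀ n, σ n = 1 ∨ σ n = -1

/-- `α` is admissible: `α m ∈ {-⌊N/2⌋, …, N - 1 - ⌊N/2⌋}` where `N = #(D m)`,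
for every `m` with `#(D m) = N_m > 3`. -/
def Admissible (D : ℕ → Finset ℕ) (α : ℕ → ℤ) : Prop :=
  ∀ m, 1 ≤ m → 3 < (D m).card →
    -(((D m).card / 2 : ℕ) : ℤ) ≤ α m ∧
      α m ≤ ((D m).card : ℤ) - 1 - (((D m).card / 2 : ℕ) : ℤ)

/-- The largest element `d n` (resp. `b n`) of `D n`. -/
def bOf (D : ℕ → Finset ℕ) (n : ℕ) : ℕ := (D n).sup id

/-- The middle element `a n` of a digit set `{0, a, b}`. -/
def aOf (D : ℕ → Finset ℕ) (n : ℕ) : ℕ := (((D n).erase 0).erase ((D n).sup id)).sup id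

/-- `l n`: the 2-adic valuation of `d n`, i.e. `d n = 2^(l n) * d'` with `d'` odd. -/
def lOf (D : ℕ → Finset ℕ) (n : ℕ) : ℕ := padicValNat 2 ((D n).sup id)

/-- The finite set `Λ_n^{σ,α}`. -/
def LamN (p : ℕ → ℕ) (D : ℕ → Finset ℕ) (σ α : ℕ → ℤ) (n : ℕ) : Set ℝ :=
  { x | ∃ c : ℕ → ℝ,
      (∀ i, (D i).card = 2 → c i = 0 ∨ c i = (σ i : ℝ) / 2 ^ (1 + lOf D i)) ∧
      (∀ i, (D i).card = 3 → c i = 0 ∨ c i = 1 / 3 ∨ c i = -(1 / 3)) ∧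
      (∀ i, 3 < (D i).card → c i = (α i : ℝ) / ((D i).card : ℝ)) ∧
      x = ∑ i ∈ Finset.Icc 1 n, (Pprod p i : ℝ) * c i }

/-- `Λ^{σ,α} = ⋃_{n ≥ 1} Λ_n^{σ,α}`. -/
def Lam (p : ℕ → ℕ) (D : ℕ → Finset ℕ) (σ α : ℕ → ℤ) : Set ℝ :=
  ⋃ n ∈ Set.Ici 1, LamN p D σ α n

/-- The Fourier transform `μ̂(ξ) = ∫ e^{-2πixξ} dμ(x)`. -/
def FT (μ : Measure ℝ) (ξ : ℝ) : ℂ :=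
  ∫ x : ℝ, Complex.exp (-(2 * Real.pi * Complex.I * x * ξ)) ∂μ

/-- The mask polynomial `m_E(t) = (1/#E) ∑_{d ∈ E} e^{2πidt}`. -/
def mask (E : Finset ℕ) (t : ℝ) : ℂ :=
  (E.card : ℂ)⁻¹ * ∑ d ∈ E, Complex.exp (2 * Real.pi * Complex.I * (d : ℝ) * t)

end

noncomputable section

/-!
A zero of `1 + 𝐞 x + 𝐞 y` can only occur when `𝐞 x` and `𝐞 y` are the two primitive cube roots of
unity. Hence the sum does not vanish when `x` and `y` have the same sign and absolute value less
than `2 / 3`, and by compactness it stays away from zero when they are at most `c < 2 / 3` in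
absolute value.

Each element of `Λ_n` is a sum of the terms `P_i * c_i` with `|c_i| ≤ 1 / 2`. Since
`2 * P_i ≤ P_{i + 1}`, it is at most `P_n - 1` in absolute value. For `|ξ| ≤ 1` the point
`t = (ξ + λ) / P_{n + 1}` therefore satisfies `|t| ≤ 1 / p_{n + 1}`, so that `x = a * t` and
`y = b * t` have the same sign and absolute value at most `b / p_{n + 1}`. The bound obtained
depends only on `c` and holds at every `n`, not just eventually.
-/

section CubeRoots

open scoped FourierTransform

theorem fourierChar_eq_one_iff {x : ℝ} : 𝐞 x = 1 ↔ ∃ n : ℤ, x = n := by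
  have h2π : 2 * π ≠ 0 := by positivity
  simp only [Real.fourierChar_apply', Circle.exp_eq_one, mul_comm (2 * π), mul_left_inj' h2π]

theorem circle_mul_eq_one_of_one_add_add_eq_zero {u v : Circle} (h : (1 + u + v : ℂ) = 0) :
    u * v = 1 := by
  have hconj : (1 + (u : ℂ)⁻¹ + (v : ℂ)⁻¹ : ℂ) = 0 := by
    simpa only [map_add, map_one, map_zero, ← Circle.coe_inv_eq_conj, Circle.coe_inv]
      using congrArg (starRingEnd ℂ) h
  have hu : (u : ℂ) ≠ 0 := u.coe_ne_zero
  have hv : (v : ℂ) ≠ 0 := v.coe_ne_zero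
  have hmul : (u * v + v + u : ℂ) = 0 := by
    field_simp at hconj
    linear_combination hconj
  apply Circle.ext
  push_cast
  linear_combination hmul - h

theorem circle_pow_three_eq_one_of_one_add_add_eq_zero {u v : Circle}
    (h : (1 + u + v : ℂ) = 0) : u ^ 3 = 1 := by
  have huv : (u * v : ℂ) = 1 := by
    rw [← Circle.coe_mul, circle_mul_eq_one_of_one_add_add_eq_zero h, Circle.coe_one]
  apply Circle.ext
  push_cast
  linear_combination (u - 1) * (u * h - huv)

theorem exists_int_eq_three_mul_of_one_add_fourierChar_add_eq_zero {x y : ℝ}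
    (h : (1 + 𝐞 x + 𝐞 y : ℂ) = 0) : ∃ n : ℤ, 3 * x = n := by
  rw [← fourierChar_eq_one_iff]
  calc 𝐞 (3 * x) = 𝐞 x ^ 3 := by simpa using AddChar.map_nsmul_eq_pow 𝐞 3 x
    _ = 1 := circle_pow_three_eq_one_of_one_add_add_eq_zero h

theorem one_add_fourierChar_add_fourierChar_ne_zero {x y : ℝ} (hx : |x| < 2 / 3)
    (hy : |y| < 2 / 3) (hxy : 0 ≤ x * y) : (1 + 𝐞 x + 𝐞 y : ℂ) ≠ 0 := by
  intro h
  have hswap : (1 + 𝐞 y + 𝐞 x : ℂ) = 0 := by rw [← h]; ring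
  obtain ⟨m, hm⟩ := exists_int_eq_three_mul_of_one_add_fourierChar_add_eq_zero h
  obtain ⟨k, hk⟩ := exists_int_eq_three_mul_of_one_add_fourierChar_add_eq_zero hswap
  obtain ⟨j, hj⟩ : ∃ j : ℤ, x + y = j := by
    rw [← fourierChar_eq_one_iff, AddChar.map_add_eq_mul]
    exact circle_mul_eq_one_of_one_add_add_eq_zero h
  rw [abs_lt] at hx hy
  have hm_lt : m < 2 := by exact_mod_cast (by linarith : (m : ℝ) < 2)
  have hm_gt : -2 < m := by exact_mod_cast (by linarith : (-2 : ℝ) < m)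
  have hk_lt : k < 2 := by exact_mod_cast (by linarith : (k : ℝ) < 2)
  have hk_gt : -2 < k := by exact_mod_cast (by linarith : (-2 : ℝ) < k)
  have hmkj : m + k = 3 * j := by exact_mod_cast (by linarith : (m + k : ℝ) = 3 * j)
  have hmk : 0 ≤ m * k := by
    exact_mod_cast (by rw [← hm, ← hk]; linarith : (0 : ℝ) ≤ m * k)
  have hneg : k = -m := by omega
  have hm0 : m = 0 := by rw [hneg] at hmk; nlinarith
  have hx0 : x = 0 := by simpa [hm0] using hm
  have hy0 : y = 0 := by simpa [hneg, hm0] using hk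
  norm_num [hx0, hy0] at h

theorem exists_pos_le_norm_one_add_fourierChar_add_fourierChar {c : ℝ} (hc : c < 2 / 3) :
    ∃ ε : ℝ, 0 < ε ∧ ∀ x y : ℝ, |x| ≤ c → |y| ≤ c → 0 ≤ x * y →
      ε ≤ ‖(1 + 𝐞 x + 𝐞 y : ℂ)‖ := by
  let S : Set (ℝ × ℝ) := (Set.Icc (-c) c ×ˢ Set.Icc (-c) c) ∩ {q | 0 ≤ q.1 * q.2}
  have hS : IsCompact S :=
    (isCompact_Icc.prod isCompact_Icc).inter_right (isClosed_le (by fun_prop) (by fun_prop))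
  have hcont : Continuous fun q : ℝ × ℝ => ‖(1 + 𝐞 q.1 + 𝐞 q.2 : ℂ)‖ := by fun_prop
  obtain ⟨ε, hε, hle⟩ := hS.exists_forall_le' hcont.continuousOn (a := 0) fun q hq =>
    norm_pos_iff.mpr (one_add_fourierChar_add_fourierChar_ne_zero
      ((abs_le.mpr hq.1.1).trans_lt hc) ((abs_le.mpr hq.1.2).trans_lt hc) hq.2)
  exact ⟨ε, hε, fun x y hx hy hxy => hle (x, y) ⟨⟨abs_le.mp hx, abs_le.mp hy⟩, hxy⟩⟩

theorem mask_eq_sum_fourierChar (E : Finset ℕ) (t : ℝ) :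
    mask E t = (#E : ℂ)⁻¹ * ∑ d ∈ E, (𝐞 (d * t) : ℂ) := by
  simp only [mask, Real.fourierChar_apply]
  congr! 3
  push_cast
  ring

theorem exists_pos_le_norm_mask_of_card_eq_three {c : ℝ} (hc : c < 2 / 3) :
    ∃ ε : ℝ, 0 < ε ∧ ∀ E : Finset ℕ, 0 ∈ E → #E = 3 → ∀ t : ℝ,
      (∀ d ∈ E, (d : ℝ) * |t| ≤ c) → ε ≤ ‖mask E t‖ := by
  obtain ⟨ε, hε, hle⟩ := exists_pos_le_norm_one_add_fourierChar_add_fourierChar hc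
  refine ⟨ε / 3, by positivity, fun E h0 hE t ht => ?_⟩
  obtain ⟨a, b, hab, herase⟩ := card_eq_two.mp (by rw [card_erase_of_mem h0, hE] : #(E.erase 0) = 2)
  have habs {d : ℕ} (hd : d ∈ E.erase 0) : |d * t| ≤ c := by
    simpa only [abs_mul, Nat.abs_cast] using ht d (mem_of_mem_erase hd)
  have hsum : ∑ d ∈ E, (𝐞 (d * t) : ℂ) = 1 + 𝐞 (a * t) + 𝐞 (b * t) := by
    rw [← add_sum_erase E _ h0, herase, sum_pair hab]
    simp [add_assoc]
  have hsign : 0 ≤ (a * t) * (b * t) := by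
    rw [mul_mul_mul_comm]
    exact mul_nonneg (by positivity) (mul_self_nonneg t)
  rw [mask_eq_sum_fourierChar, hsum, hE, norm_mul, norm_inv, Complex.norm_natCast,
    inv_mul_eq_div]
  push_cast
  gcongr
  exact hle _ _ (habs (by simp [herase])) (habs (by simp [herase])) hsign

end CubeRoots

section Frequencies

variable {p : ℕ → ℕ} {D : ℕ → Finset ℕ} {σ α : ℕ → ℤ} {n : ℕ}

theorem Pprod_succ (p : ℕ → ℕ) (n : ℕ) : Pprod p (n + 1) = Pprod p n * p (n + 1) :=
  prod_Icc_succ_top (by omega) p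

theorem abs_sum_Pprod_mul_le (hp : ∀ i, 1 ≤ i → 1 < p i) {c : ℕ → ℝ}
    (hc : ∀ i, 1 ≤ i → |c i| ≤ 1 / 2) (n : ℕ) :
    |∑ i ∈ Icc 1 n, (Pprod p i : ℝ) * c i| ≤ Pprod p n - 1 := by
  induction n with
  | zero => simp [Pprod]
  | succ n ih =>
    have hdouble : (2 * Pprod p n : ℝ) ≤ Pprod p (n + 1) := by
      rw [Pprod_succ, mul_comm]
      exact_mod_cast Nat.mul_le_mul_left (Pprod p n) (hp (n + 1) (by omega))
    calc |∑ i ∈ Icc 1 (n + 1), (Pprod p i : ℝ) * c i|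
        ≤ |∑ i ∈ Icc 1 n, (Pprod p i : ℝ) * c i| + |Pprod p (n + 1) * c (n + 1)| := by
          rw [sum_Icc_succ_top (by omega)]
          exact abs_add_le _ _
      _ ≤ (Pprod p n - 1) + Pprod p (n + 1) * (1 / 2) := by
          rw [abs_mul, Nat.abs_cast]
          gcongr
          exact hc (n + 1) (by omega)
      _ ≤ Pprod p (n + 1) - 1 := by linarith

theorem IsSigma.abs_div_two_pow_le (hσ : IsSigma σ) (i l : ℕ) :
    |(σ i : ℝ) / 2 ^ (1 + l)| ≤ 1 / 2 := by
  have hσi : |(σ i : ℝ)| = 1 := by rcases hσ i with h | h <;> simp [h]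
  rw [abs_div, hσi, abs_of_pos (by positivity)]
  gcongr
  exact le_self_pow₀ one_le_two (by omega)

theorem Admissible.abs_div_card_le (hα : Admissible D α) {m : ℕ} (hm : 1 ≤ m)
    (hcard : 3 < #(D m)) : |(α m : ℝ) / #(D m)| ≤ 1 / 2 := by
  obtain ⟨hlower, hupper⟩ := hα m hm hcard
  have htwice : |2 * α m| ≤ #(D m) := abs_le.mpr ⟨by omega, by omega⟩
  have htwice' : 2 * |(α m : ℝ)| ≤ #(D m) := by
    rw [abs_mul, abs_two] at htwice
    exact_mod_cast htwice
  rw [abs_div, Nat.abs_cast]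
  exact div_le_of_le_mul₀ (by positivity) (by norm_num) (by linarith)

theorem abs_le_of_mem_LamN (hp : ∀ i, 1 ≤ i → 1 < p i) (hD : ∀ i, 1 ≤ i → 2 ≤ #(D i))
    (hσ : IsSigma σ) (hα : Admissible D α) {l : ℝ} (hl : l ∈ LamN p D σ α n) :
    |l| ≤ Pprod p n - 1 := by
  obtain ⟨c, hc_two, hc_three, hc_large, rfl⟩ := hl
  refine abs_sum_Pprod_mul_le hp (fun i hi => ?_) n
  obtain hcard | hcard | hcard : #(D i) = 2 ∨ #(D i) = 3 ∨ 3 < #(D i) := by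
    have := hD i hi
    omega
  · rcases hc_two i hcard with h | h
    · norm_num [h]
    · exact h ▸ hσ.abs_div_two_pow_le i _
  · rcases hc_three i hcard with h | h | h <;> norm_num [h, abs_of_pos]
  · exact hc_large i hcard ▸ hα.abs_div_card_le hi hcard

theorem abs_add_div_Pprod_succ_le (hp : ∀ i, 1 ≤ i → 1 < p i) (hD : ∀ i, 1 ≤ i → 2 ≤ #(D i))
    (hσ : IsSigma σ) (hα : Admissible D α) {l : ℝ} (hl : l ∈ LamN p D σ α n) {ξ : ℝ}
    (hξ : |ξ| ≤ 1) : |(ξ + l) / Pprod p (n + 1)| ≤ 1 / p (n + 1) := by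
  have hnum : |ξ + l| ≤ Pprod p n := by
    linarith [abs_add_le ξ l, abs_le_of_mem_LamN hp hD hσ hα hl]
  have hP : (Pprod p n : ℝ) ≠ 0 := by
    exact_mod_cast prod_ne_zero_iff.mpr fun i hi => (hp i (mem_Icc.mp hi).1).ne_bot
  calc |(ξ + l) / Pprod p (n + 1)| = |ξ + l| / Pprod p (n + 1) := by rw [abs_div, Nat.abs_cast]
    _ ≤ Pprod p n / Pprod p (n + 1) := by gcongr
    _ = 1 / p (n + 1) := by
      rw [Pprod_succ, Nat.cast_mul]
      field_simp

end Frequencies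

section DigitSets

variable {p : ℕ → ℕ} {D : ℕ → Finset ℕ} {n : ℕ}

theorem T2cond.zero_mem (h : T2cond p D n) : 0 ∈ D n := by
  obtain ⟨a, b, -, -, -, -, -, hD⟩ := h
  simp [hD]

theorem T2cond.card_eq_three (h : T2cond p D n) : #(D n) = 3 := by
  obtain ⟨a, b, ha, hab, -, -, -, hD⟩ := h
  exact Finset.card_eq_three.mpr ⟨0, a, b, ha.ne, (ha.trans hab).ne, hab.ne, hD⟩

theorem T3cond.card_eq_two (h : T3cond p D n) : #(D n) = 2 := by
  obtain ⟨d, hd, -, -, hD⟩ := h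
  rw [hD, card_pair hd.ne]

theorem SatisfiesT.two_le_card (h : SatisfiesT p D) {i : ℕ} (hi : 1 ≤ i) : 2 ≤ #(D i) := by
  rcases h.1 i hi with ⟨N, hN, -, -, hD⟩ | hT2 | hT3
  · rw [hD, card_range]
    omega
  · rw [hT2.card_eq_three]
    norm_num
  · exact hT3.card_eq_two.ge

end DigitSets

theorem triple_digit_mask_lower_bound_general {c : ℝ} (hc : c < 2 / 3) :
    ∃ ε : ℝ, 0 < ε ∧ ∀ (p : ℕ → ℕ) (D : ℕ → Finset ℕ), (∀ i, 1 ≤ i → 1 < p i) →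
      (∀ i, 1 ≤ i → 2 ≤ #(D i)) → ∀ n : ℕ, 0 ∈ D (n + 1) → #(D (n + 1)) = 3 →
      (bOf D (n + 1) : ℝ) / p (n + 1) ≤ c → ∀ ξ : ℝ, |ξ| ≤ 1 →
      ∀ σ α : ℕ → ℤ, IsSigma σ → Admissible D α → ∀ l ∈ LamN p D σ α n,
        ε ≤ ‖mask (D (n + 1)) ((ξ + l) / (Pprod p (n + 1) : ℝ))‖ := by
  obtain ⟨ε, hε, hle⟩ := exists_pos_le_norm_mask_of_card_eq_three hc
  refine ⟨ε, hε, fun p D hp hD n h0 hcard hb ξ hξ σ α hσ hα l hl =>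
    hle _ h0 hcard _ fun d hd => ?_⟩
  have hdb : d ≤ bOf D (n + 1) := le_sup (f := id) hd
  calc (d : ℝ) * |(ξ + l) / Pprod p (n + 1)|
      ≤ bOf D (n + 1) * (1 / p (n + 1)) := by
        gcongr
        exact abs_add_div_Pprod_succ_le hp hD hσ hα hl hξ
    _ = bOf D (n + 1) / p (n + 1) := mul_one_div _ _
    _ ≤ c := hb

/-- Lemma 5.3. If `D (n_k + 1) = {0, a, b}` is of type (T2) and
`limsup_k b_{n_k+1}/p_{n_k+1} < 2/3`, then `|m_{D_{n_k+1}}((ξ+λ)/P_{n_k+1})| ≥ ε` for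
some `ε > 0`, all large `k`, all `|ξ| < 1` and `λ ∈ Λ_{n_k}^{σ,α}`. -/
theorem triple_digit_mask_lower_bound (p : ℕ → ℕ) (D : ℕ → Finset ℕ)
    (hp : ∀ n, 1 ≤ n → 1 < p n) (hT : SatisfiesT p D)
    (n : ℕ → ℕ) (hmono : StrictMono n) (hT2 : ∀ k, T2cond p D (n k + 1))
    (hlim : Filter.limsup (fun k => (bOf D (n k + 1) : ℝ) / (p (n k + 1) : ℝ))
        Filter.atTop < 2 / 3) :
    ∃ ε : ℝ, 0 < ε ∧ ∃ N : ℕ, ∀ k, N < k → ∀ ξ : ℝ, |ξ| < 1 →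
      ∀ σ α : ℕ → ℤ, IsSigma σ → Admissible D α → ∀ l ∈ LamN p D σ α (n k),
        ε ≤ ‖mask (D (n k + 1)) ((ξ + l) / (Pprod p (n k + 1) : ℝ))‖ := by
  obtain ⟨c, hc, hbc⟩ := hT.2
  obtain ⟨ε, hε, hle⟩ := triple_digit_mask_lower_bound_general hc
  exact ⟨ε, hε, 0, fun k _ ξ hξ => hle p D hp (fun _ => hT.two_le_card) (n k) (hT2 k).zero_mem
    (hT2 k).card_eq_three (hbc _ (Nat.le_add_left 1 _) (hT2 k)) ξ hξ.le⟩

end
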